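/- For all integers p ≥ 2 and m ≥ 2, the distinguishing number of the circulant graph C(m,p) is strictly greater than m. -/

import Mathlib

/-!
Let `π : ℤ_{mp} → ℤ_p` be the reduction. Adjacency of `u` and `v` in `C(m,p)` depends only on
`π u - π v` (`circC_adj_iff`): it says that this difference is `1` or `-1`.

Two consequences give the bound. First, vertices with the same residue modulo `p` are twins, so
exchanging them is an automorphism; a distinguishing labeling `c` therefore makes
`v ↦ (π v, c v)` injective, and counting gives at least `m` labels. Second, if there were exactly
`m` labels, this map would be a bijection onto `ℤ_p × {labels}`, and transporting the shift
`(x, l) ↦ (x + 1, l)` back through it would give a label-preserving automorphism without fixed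
points, a contradiction.
-/

/-- A permutation of the vertices is a graph automorphism if it preserves adjacency. -/
def IsGraphAut {V : Type*} (G : SimpleGraph V) (σ : Equiv.Perm V) : Prop :=
  ∀ u v : V, G.Adj (σ u) (σ v) ↔ G.Adj u v

/-- A labeling with `r` labels is distinguishing if no nontrivial automorphism preserves it. -/
def IsDistinguishing {V : Type*} (G : SimpleGraph V) {r : ℕ} (c : V → Fin r) : Prop :=
  ∀ σ : Equiv.Perm V, IsGraphAut G σ → (∀ v, c (σ v) = c v) → σ = Equiv.refl V

/-- The distinguishing number of a graph: the least `r` admitting an `r`-distinguishing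
labeling. -/
noncomputable def distinguishingNumber {V : Type*} (G : SimpleGraph V) : ℕ :=
  sInf {r : ℕ | ∃ c : V → Fin r, IsDistinguishing G c}

/-- The jump set `A = {p-1+r·p, p+1+r·p : 0 ≤ r ≤ m-1}` inside `ℤ_{mp}`. -/
def jumpSet (m p : ℕ) : Set (ZMod (m * p)) :=
  {a | ∃ r < m, a = ((p - 1 + r * p : ℕ) : ZMod (m * p)) ∨
                a = ((p + 1 + r * p : ℕ) : ZMod (m * p))}

/-- The circulant graph `C(m,p)` on vertex set `ℤ_{mp}`: `i` and `j` are adjacent iff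
`j - i (mod mp)` lies in the jump set. -/
def circC (m p : ℕ) : SimpleGraph (ZMod (m * p)) :=
  SimpleGraph.circulantGraph (jumpSet m p)

/-- The set `M_i = {i + r·p : 0 ≤ r ≤ m-1}` in `ℤ_{mp}`. -/
def Mset (m p i : ℕ) : Set (ZMod (m * p)) :=
  {v | ∃ r < m, v = ((i + r * p : ℕ) : ZMod (m * p))}

/-- Reduction modulo `p` from `ℤ_{mp}` to `ℤ_p`. -/
def residue (m p : ℕ) : ZMod (m * p) →+* ZMod p :=
  ZMod.castHom (Dvd.intro_left m rfl) (ZMod p)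

/-- The fibre of the reduction over the residue of `k` is the set of all `k + r·p`, `r < m`. -/
lemma exists_of_residue_eq {m p : ℕ} (hm : 2 ≤ m) (hp : 2 ≤ p) (a : ZMod (m * p)) (k : ℕ)
    (h : residue m p a = k) : ∃ r < m, a = ((k + r * p : ℕ) : ZMod (m * p)) := by
  have : NeZero (m * p) := ⟨by positivity⟩
  have hb : residue m p (a - k) = 0 := by simp [h]
  rw [← ZMod.natCast_zmod_val (a - (k : ZMod (m * p))), map_natCast, ZMod.natCast_eq_zero_iff] at hb
  obtain ⟨r, hr⟩ := hb
  have hlt := ZMod.val_lt (a - (k : ZMod (m * p)))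
  refine ⟨r, ?_, ?_⟩
  · rw [hr, mul_comm p r] at hlt
    exact lt_of_mul_lt_mul_right hlt (Nat.zero_le p)
  · have h2 := ZMod.natCast_zmod_val (a - (k : ZMod (m * p)))
    rw [hr, mul_comm p r] at h2
    rw [Nat.cast_add, h2]
    ring

lemma mem_jumpSet_iff {m p : ℕ} (hm : 2 ≤ m) (hp : 2 ≤ p) (a : ZMod (m * p)) :
    a ∈ jumpSet m p ↔ residue m p a = 1 ∨ residue m p a = -1 := by
  have hp1 : ((p - 1 : ℕ) : ZMod p) = -1 := by
    rw [Nat.cast_sub (by omega)]; simp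
  constructor
  · rintro ⟨r, -, rfl | rfl⟩
    · right; rw [map_natCast, Nat.cast_add, hp1]; simp
    · left; rw [map_natCast]; simp
  · rintro (h | h)
    · obtain ⟨r, hr, h⟩ := exists_of_residue_eq hm hp a (p + 1) (by simp [h])
      exact ⟨r, hr, Or.inr h⟩
    · obtain ⟨r, hr, h⟩ := exists_of_residue_eq hm hp a (p - 1) (by rw [h, hp1])
      exact ⟨r, hr, Or.inl h⟩

lemma circC_adj_iff {m p : ℕ} (hm : 2 ≤ m) (hp : 2 ≤ p) (u v : ZMod (m * p)) :
    (circC m p).Adj u v ↔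
      residue m p u - residue m p v = 1 ∨ residue m p u - residue m p v = -1 := by
  have : Fact (1 < p) := ⟨hp⟩
  have hne : residue m p u - residue m p v = 1 ∨ residue m p u - residue m p v = -1 →
      u ≠ v := by
    rintro h rfl
    simp at h
  have hsymm : residue m p v - residue m p u = -(residue m p u - residue m p v) := by ring
  simp only [circC, SimpleGraph.circulantGraph_adj, mem_jumpSet_iff hm hp, map_sub]
  rw [hsymm, neg_inj, neg_eq_iff_eq_neg]
  tauto

/-- A permutation shifting all residues modulo `p` by the same amount is an automorphism. -/
lemma isGraphAut_of_residue {m p : ℕ} (hm : 2 ≤ m) (hp : 2 ≤ p)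
    (σ : Equiv.Perm (ZMod (m * p))) (t : ZMod p)
    (h : ∀ v, residue m p (σ v) = residue m p v + t) : IsGraphAut (circC m p) σ := by
  intro u v
  rw [circC_adj_iff hm hp, circC_adj_iff hm hp, h, h, add_sub_add_right_eq_sub]

/-- A distinguishing labeling separates the vertices of each residue class, since these are
twins. -/
lemma IsDistinguishing.injective_residue_label {m p r : ℕ} (hm : 2 ≤ m) (hp : 2 ≤ p)
    {c : ZMod (m * p) → Fin r} (hc : IsDistinguishing (circC m p) c) :
    Function.Injective (fun v => (residue m p v, c v)) := by
  intro u v huv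
  obtain ⟨h1, h2⟩ := Prod.ext_iff.mp huv
  dsimp only at h1 h2
  have hswap : ∀ {β : Type} (f : ZMod (m * p) → β), f u = f v →
      ∀ x, f (Equiv.swap u v x) = f x := by
    intro β f hf x
    rw [Equiv.swap_apply_def]
    split_ifs with hu hv
    · rw [hu, hf]
    · rw [hv, hf]
    · rfl
  have := hc (Equiv.swap u v)
    (isGraphAut_of_residue hm hp _ 0 fun x => by rw [hswap _ h1, add_zero]) (hswap c h2)
  exact Equiv.swap_eq_refl_iff.mp this

lemma IsDistinguishing.lt_card_labels {m p r : ℕ} (hm : 2 ≤ m) (hp : 2 ≤ p)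
    {c : ZMod (m * p) → Fin r} (hc : IsDistinguishing (circC m p) c) : m < r := by
  have : NeZero (m * p) := ⟨by positivity⟩
  have : NeZero p := ⟨by omega⟩
  have : Fact (1 < p) := ⟨hp⟩
  have hinj := hc.injective_residue_label hm hp
  have hle : m ≤ r := by
    have h := Fintype.card_le_of_injective _ hinj
    rw [Fintype.card_prod, ZMod.card, ZMod.card, Fintype.card_fin, mul_comm p] at h
    exact le_of_mul_le_mul_right h (by omega)
  refine lt_of_le_of_ne hle ?_
  rintro rfl
  have hbij : Function.Bijective (fun v => (residue m p v, c v)) :=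
    (Fintype.bijective_iff_injective_and_card _).mpr ⟨hinj, by
      rw [Fintype.card_prod, ZMod.card, ZMod.card, Fintype.card_fin, mul_comm]⟩
  let e := Equiv.ofBijective _ hbij
  let σ : Equiv.Perm (ZMod (m * p)) :=
    (e.trans ((Equiv.addRight (1 : ZMod p)).prodCongr (Equiv.refl (Fin m)))).trans e.symm
  have hσ : ∀ v, (residue m p (σ v), c (σ v)) = (residue m p v + 1, c v) := fun v =>
    e.apply_symm_apply (residue m p v + 1, c v)
  have hσ1 : ∀ v, residue m p (σ v) = residue m p v + 1 := fun v => congrArg Prod.fst (hσ v)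
  have hid := hc σ (isGraphAut_of_residue hm hp σ 1 hσ1) fun v => congrArg Prod.snd (hσ v)
  have h0 := hσ1 0
  rw [hid] at h0
  simp at h0

/-- On a finite vertex set the infimum defining the distinguishing number is attained, because an
injective labeling is distinguishing. -/
lemma exists_isDistinguishing {V : Type*} [Finite V] (G : SimpleGraph V) :
    ∃ c : V → Fin (distinguishingNumber G), IsDistinguishing G c :=
  Nat.sInf_mem (s := {r : ℕ | ∃ c : V → Fin r, IsDistinguishing G c})
    ⟨Nat.card V, Finite.equivFin V, fun _ _ h => Equiv.ext fun v =>
      (Finite.equivFin V).injective (h v)⟩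

theorem stmt_6 (m p : ℕ) (hm : 2 ≤ m) (hp : 2 ≤ p) :
    m < distinguishingNumber (circC m p) := by
  have : NeZero (m * p) := ⟨by positivity⟩
  obtain ⟨c, hc⟩ := exists_isDistinguishing (circC m p)
  exact hc.lt_card_labels hm hp
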